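/- Let $C_k = \frac{1}{k!}\frac{1}{2\pi i}\int_{c-i\infty}^{c+i\infty} e^s\Big(\frac{(\log s+\gamma)^k}{s^2} - \frac{k(\log s+\gamma)^{k-1}}{s^2}\Big)\,ds$ for $c>0$ and integers $k \ge 0$. Then for every complex $z$ with $|z| < 1$, $\sum_{k=0}^{\infty} C_k z^k = \frac{1}{2\pi i}\int_{c-i\infty}^{c+i\infty} e^s\,\frac{e^{\gamma z} s^z}{s^2}(1-z)\,ds = \frac{e^{\gamma z}(1-z)}{\Gamma(2-z)} = \frac{e^{\gamma z}}{\Gamma(1-z)}$. -/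

import Mathlib

open MeasureTheory Filter Topology

lemma aux_congr {α : Type*} [AddCommMonoid α] [TopologicalSpace α] {f g : ℕ → α} {a : α}
    (h : HasSum g a) (e : ∀ k, f k = g k) : HasSum f a := by
  rw [funext e]; exact h

lemma aux_gamma (a : ℂ) (ha : 0 < a.re) (r : ℂ) (hr : 0 < r.re) :
    ∫ x : ℝ in Set.Ioi 0, (x : ℂ) ^ (a - 1) * Complex.exp (-r * x) =
      r ^ (-a) * Complex.Gamma a := by
  set U : Set ℂ := {r | 0 < r.re} with hU
  have hUo : IsOpen U := isOpen_lt continuous_const Complex.continuous_re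
  have hUc : IsPreconnected U := (convex_halfSpace_re_gt 0).isPreconnected
  have hmeas : ∀ r : ℂ, AEStronglyMeasurable
      (fun x : ℝ => (x : ℂ) ^ (a - 1) * Complex.exp (-r * x)) (volume.restrict (Set.Ioi 0)) := by
    intro r
    refine ContinuousOn.aestronglyMeasurable ?_ measurableSet_Ioi
    intro x hx
    apply ContinuousAt.continuousWithinAt
    refine ContinuousAt.mul ?_ (by fun_prop)
    exact ContinuousAt.cpow (by fun_prop) continuousAt_const (Or.inl (by simpa using hx))
  have hd : DifferentiableOn ℂ (fun r : ℂ =>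
      ∫ x : ℝ in Set.Ioi 0, (x : ℂ) ^ (a - 1) * Complex.exp (-r * x)) U := by
    intro r0 hr0
    have hr0' : 0 < r0.re := hr0
    apply DifferentiableAt.differentiableWithinAt
    have hs : {r : ℂ | r0.re / 2 < r.re} ∈ 𝓝 r0 :=
      (isOpen_lt continuous_const Complex.continuous_re).mem_nhds (by simp; linarith)
    refine (hasDerivAt_integral_of_dominated_loc_of_deriv_le
      (F := fun (r : ℂ) (x : ℝ) => (x : ℂ) ^ (a - 1) * Complex.exp (-r * x))
      (F' := fun (r : ℂ) (x : ℝ) => (-(x : ℂ)) * ((x : ℂ) ^ (a - 1) * Complex.exp (-r * x)))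
      (bound := fun x : ℝ => x ^ a.re * Real.exp (-(r0.re / 2) * x ^ (1 : ℝ)))
      hs ?_ ?_ ?_ ?_ ?_ ?_).2.differentiableAt
    · exact Eventually.of_forall hmeas
    · have h := integrableOn_rpow_mul_exp_neg_mul_rpow (p := 1) (s := (a - 1).re) (b := r0.re)
        (by simp; linarith) one_pos hr0'
      refine Integrable.mono' h (hmeas r0) ?_
      refine (ae_restrict_iff' measurableSet_Ioi).mpr (Eventually.of_forall fun x hx => ?_)
      rw [norm_mul, Complex.norm_cpow_eq_rpow_re_of_pos hx, Complex.norm_exp]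
      apply le_of_eq
      simp
    · exact (Complex.continuous_ofReal.neg.aestronglyMeasurable).mul (hmeas r0)
    · refine (ae_restrict_iff' measurableSet_Ioi).mpr (Eventually.of_forall fun x hx r hr => ?_)
      have hx' : 0 < x := hx
      have hr' : r0.re / 2 < r.re := hr
      rw [norm_mul, norm_mul, Complex.norm_cpow_eq_rpow_re_of_pos hx, Complex.norm_exp, norm_neg,
        Complex.norm_real, Real.norm_of_nonneg hx'.le, ← mul_assoc, ← Real.rpow_one_add' hx'.le
          (by simp; linarith)]
      have e1 : 1 + (a - 1).re = a.re := by simp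
      have e2 : (-r * (x : ℂ)).re = -r.re * x := by simp
      rw [e1, e2, Real.rpow_one]
      gcongr
    · exact integrableOn_rpow_mul_exp_neg_mul_rpow (by linarith) one_pos (by linarith)
    · refine Eventually.of_forall fun x r _ => ?_
      have h1 : HasDerivAt (fun r : ℂ => -r * (x : ℂ)) (-(x : ℂ)) r := by
        simpa using ((hasDerivAt_id r).neg.mul_const (x : ℂ))
      have := (h1.cexp).const_mul ((x : ℂ) ^ (a - 1))
      exact this.congr_deriv (by ring)
  have hd2 : DifferentiableOn ℂ (fun r : ℂ => r ^ (-a) * Complex.Gamma a) U := by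
    intro r hr
    apply DifferentiableAt.differentiableWithinAt
    exact (differentiableAt_id.cpow_const (Or.inl hr)).mul_const _
  have hreal : ∀ t : ℝ, 0 < t → ∫ x : ℝ in Set.Ioi 0, (x : ℂ) ^ (a - 1) * Complex.exp (-(t : ℂ) * x) =
      (t : ℂ) ^ (-a) * Complex.Gamma a := by
    intro t ht
    have := Complex.integral_cpow_mul_exp_neg_mul_Ioi ha ht
    rw [one_div, Complex.inv_cpow, ← Complex.cpow_neg] at this
    · rw [← this]
      simp only [neg_mul]
    · rw [Complex.arg_ofReal_of_nonneg ht.le]; exact Real.pi_pos.ne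
  have hfr : ∃ᶠ r : ℂ in 𝓝[≠] 1, ∫ x : ℝ in Set.Ioi 0, (x : ℂ) ^ (a - 1) * Complex.exp (-r * x) =
      r ^ (-a) * Complex.Gamma a := by
    have ht : Tendsto (fun t : ℝ => (t : ℂ)) (𝓝[≠] 1) (𝓝[≠] 1) := by
      rw [tendsto_nhdsWithin_iff]
      refine ⟨?_, ?_⟩
      · have : ContinuousAt (fun t : ℝ => (t : ℂ)) 1 := by fun_prop
        have h2 := this.tendsto
        simp only [Complex.ofReal_one] at h2
        exact h2.mono_left nhdsWithin_le_nhds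
      · filter_upwards [self_mem_nhdsWithin] with t ht
        simpa using ht
    refine ht.frequently (Eventually.frequently ?_)
    filter_upwards [nhdsWithin_le_nhds (Ioi_mem_nhds (show (0 : ℝ) < 1 by norm_num))] with t ht
    exact hreal t ht
  exact (hd.analyticOnNhd hUo).eqOn_of_preconnected_of_frequently_eq (hd2.analyticOnNhd hUo) hUc
    (show (1 : ℂ) ∈ U by simp [hU]) hfr hr

lemma aux_ne (c : ℝ) (hc : 0 < c) (t : ℝ) : (c : ℂ) + t * Complex.I ≠ 0 := by
  intro h
  have := congrArg Complex.re h
  simp at this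
  exact hc.ne' this

lemma aux_slit (c : ℝ) (hc : 0 < c) (t : ℝ) :
    (c : ℂ) + t * Complex.I ∈ Complex.slitPlane := by
  left; simpa using hc

lemma aux_cont_log (c : ℝ) (hc : 0 < c) :
    Continuous (fun t : ℝ => Complex.log ((c : ℂ) + t * Complex.I)) := by
  refine Continuous.clog (by fun_prop) (aux_slit c hc)

lemma aux_norm_ge (c : ℝ) (hc : 0 < c) (t : ℝ) : c ≤ ‖(c : ℂ) + t * Complex.I‖ := by
  have := Complex.abs_re_le_norm ((c : ℂ) + t * Complex.I)
  simpa [abs_of_pos hc] using this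

lemma aux_log_bound (c : ℝ) (hc : 0 < c) (t : ℝ) :
    ‖Complex.log ((c : ℂ) + t * Complex.I)‖ ≤
      Real.log ‖(c : ℂ) + t * Complex.I‖ + (2 * |Real.log c| + Real.pi) := by
  set s := (c : ℂ) + t * Complex.I
  have h1 := Complex.norm_le_abs_re_add_abs_im (Complex.log s)
  rw [Complex.log_re, Complex.log_im] at h1
  have h2 := Complex.abs_arg_le_pi s
  have h3 : Real.log c ≤ Real.log ‖s‖ := Real.log_le_log hc (aux_norm_ge c hc t)
  have h4 := neg_abs_le (Real.log c)
  have h5 := abs_nonneg (Real.log c)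
  rcases abs_cases (Real.log ‖s‖) with h | h <;> linarith [h.1]

lemma aux_integrable (c : ℝ) (hc : 0 < c) (r : ℝ) (hr0 : 0 ≤ r) (hr : r < 1) :
    Integrable (fun t : ℝ => Real.exp (r * ‖Complex.log ((c : ℂ) + t * Complex.I)‖) /
      ‖(c : ℂ) + t * Complex.I‖ ^ 2) := by
  have hb := integrable_rpow_neg_one_add_norm_sq (E := ℝ) (μ := volume) (r := 2 - r)
    (by simp; linarith)
  set K := Real.exp (r * (2 * |Real.log c| + Real.pi))
  set m := min 1 (c ^ 2)
  have hm : 0 < m := lt_min one_pos (by positivity)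
  refine (hb.const_mul (K * m ^ (-(2 - r) / 2))).mono' ?_ (Eventually.of_forall fun t => ?_)
  · apply Continuous.aestronglyMeasurable
    refine Continuous.div ?_ (by fun_prop) ?_
    · exact Real.continuous_exp.comp (continuous_const.mul (aux_cont_log c hc).norm)
    · intro t; exact pow_ne_zero _ (norm_ne_zero_iff.mpr (aux_ne c hc t))
  · have hs : 0 < ‖(c : ℂ) + t * Complex.I‖ := norm_pos_iff.mpr (aux_ne c hc t)
    have hlog := aux_log_bound c hc t
    have hsq : ‖(c : ℂ) + t * Complex.I‖ ^ 2 = c ^ 2 + t ^ 2 := by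
      rw [Complex.sq_norm, Complex.normSq_add_mul_I]
    set n := ‖(c : ℂ) + t * Complex.I‖
    rw [Real.norm_of_nonneg (by positivity)]
    have e1 : Real.exp (r * ‖Complex.log ((c : ℂ) + t * Complex.I)‖) ≤ K * n ^ r := by
      rw [Real.rpow_def_of_pos hs, ← Real.exp_add]
      apply Real.exp_le_exp.mpr
      nlinarith
    have e2 : n ^ r / n ^ 2 = (n ^ 2) ^ (-(2 - r) / 2) := by
      rw [← Real.rpow_natCast, ← Real.rpow_sub hs, ← Real.rpow_mul hs.le]
      congr 1
      push_cast
      ring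
    have e3 : m * (1 + ‖t‖ ^ 2) ≤ n ^ 2 := by
      rw [hsq, Real.norm_eq_abs, sq_abs]
      have := min_le_left 1 (c ^ 2)
      have := min_le_right 1 (c ^ 2)
      nlinarith [sq_nonneg t]
    have e4 : (n ^ 2) ^ (-(2 - r) / 2) ≤ (m * (1 + ‖t‖ ^ 2)) ^ (-(2 - r) / 2) :=
      Real.rpow_le_rpow_of_nonpos (by positivity) e3 (by linarith)
    rw [Real.mul_rpow hm.le (by positivity)] at e4
    calc _ ≤ K * n ^ r / n ^ 2 := by gcongr
      _ = K * (n ^ 2) ^ (-(2 - r) / 2) := by rw [mul_div_assoc, e2]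
      _ ≤ K * (m ^ (-(2 - r) / 2) * (1 + ‖t‖ ^ 2) ^ (-(2 - r) / 2)) := by
        gcongr
      _ = _ := by ring

lemma aux_cpow_integrable (c : ℝ) (hc : 0 < c) (z : ℂ) (hz : ‖z‖ < 1) :
    Integrable (fun t : ℝ => ((c : ℂ) + t * Complex.I) ^ z / ((c : ℂ) + t * Complex.I) ^ 2) := by
  refine (aux_integrable c hc ‖z‖ (norm_nonneg _) hz).mono' ?_ (Eventually.of_forall fun t => ?_)
  · apply Continuous.aestronglyMeasurable
    refine Continuous.div ?_ (by fun_prop) ?_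
    · exact Continuous.cpow (by fun_prop) continuous_const (aux_slit c hc)
    · intro t; exact pow_ne_zero _ (aux_ne c hc t)
  · rw [norm_div, norm_pow]
    gcongr
    rw [Complex.cpow_def_of_ne_zero (aux_ne c hc t), Complex.norm_exp]
    apply Real.exp_le_exp.mpr
    refine (Complex.re_le_norm _).trans ?_
    rw [norm_mul, mul_comm]

lemma aux_laplace (c : ℝ) (hc : 0 < c) (z : ℂ) (hz : ‖z‖ < 1) :
    ∫ t : ℝ, Complex.exp ((c : ℂ) + t * Complex.I) *
      (((c : ℂ) + t * Complex.I) ^ z / ((c : ℂ) + t * Complex.I) ^ 2) =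
      2 * Real.pi / Complex.Gamma (2 - z) := by
  have hzre : z.re < 1 := lt_of_le_of_lt (Complex.re_le_norm z) hz
  have hG : Complex.Gamma (2 - z) ≠ 0 := by
    apply Complex.Gamma_ne_zero_of_re_pos
    simp; linarith
  have h2pi : (2 * Real.pi) ≠ 0 := by positivity
  set g : ℝ → ℂ := fun t => ((c : ℂ) + t * Complex.I) ^ z / ((c : ℂ) + t * Complex.I) ^ 2 with hg
  set f : ℝ → ℂ := (Set.Ioi (0 : ℝ)).indicator
    (fun x => (x : ℂ) ^ ((2 - z) - 1) * Complex.exp (-(c : ℂ) * x)) with hf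
  have hfint : Integrable f := by
    rw [hf, integrable_indicator_iff measurableSet_Ioi]
    have h := integrableOn_rpow_mul_exp_neg_mul_rpow (p := 1) (s := (1 - z).re) (b := c)
      (by simp; linarith) one_pos hc
    refine Integrable.mono' h ?_ ?_
    · refine ContinuousOn.aestronglyMeasurable ?_ measurableSet_Ioi
      intro x hx
      apply ContinuousAt.continuousWithinAt
      refine ContinuousAt.mul ?_ (by fun_prop)
      exact ContinuousAt.cpow (by fun_prop) continuousAt_const (Or.inl (by simpa using hx))
    · refine (ae_restrict_iff' measurableSet_Ioi).mpr (Eventually.of_forall fun x hx => ?_)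
      rw [norm_mul, Complex.norm_cpow_eq_rpow_re_of_pos hx, Complex.norm_exp]
      apply le_of_eq
      have : (2 - z - 1).re = (1 - z).re := by simp; ring
      rw [this]
      simp
  have hF : FourierTransform.fourier f =
      fun w : ℝ => Complex.Gamma (2 - z) * g ((2 * Real.pi) * w) := by
    ext w
    rw [Real.fourier_real_eq_integral_exp_smul]
    have hne := aux_ne c hc ((2 * Real.pi) * w)
    have key := aux_gamma (2 - z) (by simp; linarith)
      ((c : ℂ) + ((2 * Real.pi * w : ℝ) : ℂ) * Complex.I) (by simpa using hc)
    have : (fun v : ℝ => Complex.exp (↑(-2 * Real.pi * v * w) * Complex.I) • f v) =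
        (Set.Ioi (0 : ℝ)).indicator (fun x : ℝ => (x : ℂ) ^ ((2 - z) - 1) *
          Complex.exp (-((c : ℂ) + ((2 * Real.pi * w : ℝ) : ℂ) * Complex.I) * x)) := by
      ext v
      by_cases hv : v ∈ Set.Ioi (0 : ℝ)
      · simp only [hf, Set.indicator_of_mem hv, smul_eq_mul]
        rw [mul_left_comm, ← Complex.exp_add]
        congr 2
        push_cast
        ring
      · simp only [hf, Set.indicator_of_notMem hv, smul_zero]
    rw [this, integral_indicator measurableSet_Ioi, key, mul_comm, hg]
    congr 1
    simp only
    rw [neg_sub, Complex.cpow_sub _ _ hne]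
    congr 1
    exact_mod_cast Complex.cpow_natCast _ 2
  have hgi : Integrable g := aux_cpow_integrable c hc z hz
  have hFint : Integrable (FourierTransform.fourier f) := by
    rw [hF]
    exact (hgi.comp_mul_left' h2pi).const_mul _
  have hcont : ContinuousAt f 1 := by
    have h1 : ContinuousAt (fun x : ℝ => (x : ℂ) ^ ((2 - z) - 1) * Complex.exp (-(c : ℂ) * x)) 1 := by
      refine ContinuousAt.mul ?_ (by fun_prop)
      exact ContinuousAt.cpow (by fun_prop) continuousAt_const (Or.inl (by simp))
    refine h1.congr ?_
    filter_upwards [Ioi_mem_nhds (show (0 : ℝ) < 1 by norm_num)] with x hx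
    rw [hf, Set.indicator_of_mem hx]
  have inv := hfint.fourierInv_fourier_eq hFint hcont
  rw [Real.fourierInv_eq', hF] at inv
  have hf1 : f 1 = Complex.exp (-(c : ℂ)) := by
    rw [hf, Set.indicator_of_mem (by simp)]; simp
  rw [hf1] at inv
  have e : ∀ v : ℝ, Complex.exp (↑(2 * Real.pi * inner ℝ v (1 : ℝ)) * Complex.I) •
      (Complex.Gamma (2 - z) * g (2 * Real.pi * v)) =
      (fun t : ℝ => Complex.Gamma (2 - z) * (Complex.exp (t * Complex.I) * g t))
        (2 * Real.pi * v) := by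
    intro v
    simp
    ring
  simp_rw [e] at inv
  rw [Measure.integral_comp_mul_left (fun t : ℝ => Complex.Gamma (2 - z) *
    (Complex.exp (t * Complex.I) * g t)) (2 * Real.pi), integral_const_mul] at inv
  have hsplit : ∀ t : ℝ, Complex.exp ((c : ℂ) + t * Complex.I) * g t =
      Complex.exp c * (Complex.exp (t * Complex.I) * g t) := by
    intro t; rw [Complex.exp_add]; ring
  change ∫ t : ℝ, Complex.exp ((c : ℂ) + t * Complex.I) * g t = _
  simp_rw [hsplit]
  rw [integral_const_mul]
  rw [abs_of_pos (by positivity), Complex.exp_neg, Complex.real_smul] at inv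
  have hpi : (Real.pi : ℂ) ≠ 0 := by exact_mod_cast Real.pi_ne_zero
  have hec := Complex.exp_ne_zero (c : ℂ)
  push_cast at inv
  field_simp at inv
  field_simp
  linear_combination inv

lemma aux_seriesC (z L : ℂ) :
    HasSum (fun k : ℕ => z ^ k / (k.factorial : ℂ) * (k * L ^ (k - 1)))
      (z * Complex.exp (z * L)) := by
  rw [← hasSum_nat_add_iff' 1, Complex.exp_eq_exp_ℂ]
  have h := (NormedSpace.expSeries_div_hasSum_exp (z * L)).mul_left z
  simp only [Finset.sum_range_one, Nat.cast_zero, zero_mul, mul_zero, sub_zero]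
  refine aux_congr h fun k => ?_
  have h1 : ((k : ℂ) + 1) ≠ 0 := by exact_mod_cast Nat.succ_ne_zero k
  have h2 : (k.factorial : ℂ) ≠ 0 := by exact_mod_cast k.factorial_ne_zero
  rw [Nat.factorial_succ]
  push_cast
  field_simp
  try ring

lemma aux_series0C (z L : ℂ) :
    HasSum (fun k : ℕ => z ^ k / (k.factorial : ℂ) * L ^ k) (Complex.exp (z * L)) := by
  rw [Complex.exp_eq_exp_ℂ]
  refine aux_congr (NormedSpace.expSeries_div_hasSum_exp (z * L)) fun k => ?_
  rw [mul_pow]; ring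

lemma aux_seriesR (z L : ℝ) :
    HasSum (fun k : ℕ => z ^ k / (k.factorial : ℝ) * (k * L ^ (k - 1)))
      (z * Real.exp (z * L)) := by
  rw [← hasSum_nat_add_iff' 1, Real.exp_eq_exp_ℝ]
  have h := (NormedSpace.expSeries_div_hasSum_exp (z * L)).mul_left z
  simp only [Finset.sum_range_one, Nat.cast_zero, zero_mul, mul_zero, sub_zero]
  refine aux_congr h fun k => ?_
  have h1 : ((k : ℝ) + 1) ≠ 0 := by exact_mod_cast Nat.succ_ne_zero k
  have h2 : (k.factorial : ℝ) ≠ 0 := by exact_mod_cast k.factorial_ne_zero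
  rw [Nat.factorial_succ]
  push_cast
  field_simp
  try ring

lemma aux_series0R (z L : ℝ) :
    HasSum (fun k : ℕ => z ^ k / (k.factorial : ℝ) * L ^ k) (Real.exp (z * L)) := by
  rw [Real.exp_eq_exp_ℝ]
  refine aux_congr (NormedSpace.expSeries_div_hasSum_exp (z * L)) fun k => ?_
  rw [mul_pow]; ring

lemma aux_hasSum (c : ℝ) (hc : 0 < c) (z : ℂ) (hz : ‖z‖ < 1) (γ : ℝ) :
    HasSum (fun k : ℕ => ∫ t : ℝ, z ^ k / (k.factorial : ℂ) *
        (Complex.exp ((c : ℂ) + t * Complex.I) *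
          ((Complex.log ((c : ℂ) + t * Complex.I) + (γ : ℂ)) ^ k / ((c : ℂ) + t * Complex.I) ^ 2 -
            (k : ℂ) * (Complex.log ((c : ℂ) + t * Complex.I) +
              (γ : ℂ)) ^ (k - 1) / ((c : ℂ) + t * Complex.I) ^ 2) *
          Complex.I))
      (∫ t : ℝ, Complex.exp ((c : ℂ) + t * Complex.I) *
            (Complex.exp ((γ : ℂ) * z) *
              ((c : ℂ) + t * Complex.I) ^ z / ((c : ℂ) + t * Complex.I) ^ 2) * (1 - z) *
            Complex.I) := by
  have hb : ∀ t : ℝ, HasSum (fun k : ℕ => Real.exp c / ‖(c : ℂ) + t * Complex.I‖ ^ 2 *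
      (‖z‖ ^ k / (k.factorial : ℝ) * ‖Complex.log ((c : ℂ) + t * Complex.I) + (γ : ℂ)‖ ^ k +
       ‖z‖ ^ k / (k.factorial : ℝ) *
        (k * ‖Complex.log ((c : ℂ) + t * Complex.I) + (γ : ℂ)‖ ^ (k - 1))))
      (Real.exp c / ‖(c : ℂ) + t * Complex.I‖ ^ 2 *
        (Real.exp (‖z‖ * ‖Complex.log ((c : ℂ) + t * Complex.I) + (γ : ℂ)‖) +
         ‖z‖ * Real.exp (‖z‖ * ‖Complex.log ((c : ℂ) + t * Complex.I) + (γ : ℂ)‖))) := by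
    intro t
    exact ((aux_series0R _ _).add (aux_seriesR _ _)).mul_left _
  refine hasSum_integral_of_dominated_convergence
    (fun (k : ℕ) (t : ℝ) => Real.exp c / ‖(c : ℂ) + t * Complex.I‖ ^ 2 *
      (‖z‖ ^ k / (k.factorial : ℝ) * ‖Complex.log ((c : ℂ) + t * Complex.I) + (γ : ℂ)‖ ^ k +
       ‖z‖ ^ k / (k.factorial : ℝ) *
        (k * ‖Complex.log ((c : ℂ) + t * Complex.I) + (γ : ℂ)‖ ^ (k - 1)))) ?_ ?_ ?_ ?_ ?_
  · intro k
    apply Continuous.aestronglyMeasurable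
    have hl := aux_cont_log c hc
    have hq : ∀ t : ℝ, ((c : ℂ) + t * Complex.I) ^ 2 ≠ 0 :=
      fun t => pow_ne_zero _ (aux_ne c hc t)
    fun_prop (disch := exact hq)
  · intro k
    refine Eventually.of_forall fun t => ?_
    have : ‖Complex.exp ((c : ℂ) + t * Complex.I)‖ = Real.exp c := by
      rw [Complex.norm_exp]; simp
    rw [← sub_div]
    simp only [norm_mul, norm_div, norm_pow, this, Complex.norm_I, mul_one, Complex.norm_natCast]
    set n := ‖(c : ℂ) + t * Complex.I‖
    have h := norm_sub_le ((Complex.log ((c : ℂ) + t * Complex.I) + (γ : ℂ)) ^ k)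
      ((k : ℂ) * (Complex.log ((c : ℂ) + t * Complex.I) + (γ : ℂ)) ^ (k - 1))
    simp only [norm_mul, norm_pow, Complex.norm_natCast] at h
    calc _ ≤ ‖z‖ ^ k / (k.factorial : ℝ) * (Real.exp c *
          ((‖Complex.log ((c : ℂ) + t * Complex.I) + (γ : ℂ)‖ ^ k +
            k * ‖Complex.log ((c : ℂ) + t * Complex.I) + (γ : ℂ)‖ ^ (k - 1)) / n ^ 2)) := by gcongr
      _ = _ := by ring
  · exact Eventually.of_forall fun t => (hb t).summable
  · simp_rw [fun t => (hb t).tsum_eq]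
    have hi := (aux_integrable c hc ‖z‖ (norm_nonneg _) hz).const_mul
      (Real.exp c * (1 + ‖z‖) * Real.exp (‖z‖ * |γ|))
    refine hi.mono' ?_ (Eventually.of_forall fun t => ?_)
    · apply Continuous.aestronglyMeasurable
      have hl := aux_cont_log c hc
      have hq : ∀ t : ℝ, ‖(c : ℂ) + t * Complex.I‖ ^ 2 ≠ 0 :=
        fun t => pow_ne_zero _ (norm_ne_zero_iff.mpr (aux_ne c hc t))
      fun_prop (disch := exact hq)
    · rw [Real.norm_of_nonneg (by positivity)]
      have h := norm_add_le (Complex.log ((c : ℂ) + t * Complex.I)) (γ : ℂ)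
      rw [Complex.norm_real, Real.norm_eq_abs] at h
      have h2 : Real.exp (‖z‖ * ‖Complex.log ((c : ℂ) + t * Complex.I) + (γ : ℂ)‖) ≤
          Real.exp (‖z‖ * |γ|) * Real.exp (‖z‖ * ‖Complex.log ((c : ℂ) + t * Complex.I)‖) := by
        rw [← Real.exp_add]
        apply Real.exp_le_exp.mpr
        nlinarith [norm_nonneg z]
      calc _ = Real.exp c / ‖(c : ℂ) + t * Complex.I‖ ^ 2 * (1 + ‖z‖) *
            Real.exp (‖z‖ * ‖Complex.log ((c : ℂ) + t * Complex.I) + (γ : ℂ)‖) := by ring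
        _ ≤ Real.exp c / ‖(c : ℂ) + t * Complex.I‖ ^ 2 * (1 + ‖z‖) *
            (Real.exp (‖z‖ * |γ|) *
              Real.exp (‖z‖ * ‖Complex.log ((c : ℂ) + t * Complex.I)‖)) := by gcongr
        _ = _ := by ring
  · refine Eventually.of_forall fun t => ?_
    have hs := ((aux_series0C z (Complex.log ((c : ℂ) + t * Complex.I) + (γ : ℂ))).sub
      (aux_seriesC z (Complex.log ((c : ℂ) + t * Complex.I) + (γ : ℂ)))).mul_left
      (Complex.exp ((c : ℂ) + t * Complex.I) / ((c : ℂ) + t * Complex.I) ^ 2 * Complex.I)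
    have e : Complex.exp ((c : ℂ) + t * Complex.I) *
            (Complex.exp ((γ : ℂ) * z) *
              ((c : ℂ) + t * Complex.I) ^ z / ((c : ℂ) + t * Complex.I) ^ 2) * (1 - z) *
            Complex.I = Complex.exp ((c : ℂ) + t * Complex.I) / ((c : ℂ) + t * Complex.I) ^ 2 *
            Complex.I * (Complex.exp (z * (Complex.log ((c : ℂ) + t * Complex.I) + (γ : ℂ))) -
            z * Complex.exp (z * (Complex.log ((c : ℂ) + t * Complex.I) + (γ : ℂ)))) := by
      rw [mul_comm (Complex.exp ((γ : ℂ) * z)), Complex.cpow_def_of_ne_zero (aux_ne c hc t), ← Complex.exp_add,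
        show Complex.log ((c : ℂ) + t * Complex.I) * z + (γ : ℂ) * z =
          z * (Complex.log ((c : ℂ) + t * Complex.I) + (γ : ℂ)) by ring]
      ring
    rw [e]
    refine aux_congr hs fun k => ?_
    ring

/-- with `C_k = (1/k!)(1/(2πi)) ∫_{c-i∞}^{c+i∞} e^s ((log s+γ)^k/s² -
k(log s+γ)^{k-1}/s²) ds` for `c > 0`, for every `z` with `|z| < 1`,
`∑ C_k z^k = (1/(2πi)) ∫_{c-i∞}^{c+i∞} e^s e^{γz} s^z (1-z)/s² ds
= e^{γz}(1-z)/Γ(2-z) = e^{γz}/Γ(1-z)`. -/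
theorem Ck_generating_function (c : ℝ) (hc : 0 < c) (C : ℕ → ℂ)
    (hC : ∀ k : ℕ, C k =
      (1 / (Nat.factorial k : ℂ)) * (1 / (2 * Real.pi * Complex.I)) *
        ∫ t : ℝ, Complex.exp ((c : ℂ) + t * Complex.I) *
          ((Complex.log ((c : ℂ) + t * Complex.I) +
              (Real.eulerMascheroniConstant : ℂ)) ^ k / ((c : ℂ) + t * Complex.I) ^ 2 -
            (k : ℂ) * (Complex.log ((c : ℂ) + t * Complex.I) +
              (Real.eulerMascheroniConstant : ℂ)) ^ (k - 1) / ((c : ℂ) + t * Complex.I) ^ 2) *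
          Complex.I) :
    ∀ z : ℂ, ‖z‖ < 1 →
      HasSum (fun k : ℕ => C k * z ^ k)
        ((1 / (2 * Real.pi * Complex.I)) *
          ∫ t : ℝ, Complex.exp ((c : ℂ) + t * Complex.I) *
            (Complex.exp ((Real.eulerMascheroniConstant : ℂ) * z) *
              ((c : ℂ) + t * Complex.I) ^ z / ((c : ℂ) + t * Complex.I) ^ 2) * (1 - z) *
            Complex.I) ∧
      ((1 / (2 * Real.pi * Complex.I)) *
          ∫ t : ℝ, Complex.exp ((c : ℂ) + t * Complex.I) *
            (Complex.exp ((Real.eulerMascheroniConstant : ℂ) * z) *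
              ((c : ℂ) + t * Complex.I) ^ z / ((c : ℂ) + t * Complex.I) ^ 2) * (1 - z) *
            Complex.I)
        = Complex.exp ((Real.eulerMascheroniConstant : ℂ) * z) * (1 - z) /
            Complex.Gamma (2 - z) ∧
      Complex.exp ((Real.eulerMascheroniConstant : ℂ) * z) * (1 - z) /
          Complex.Gamma (2 - z)
        = Complex.exp ((Real.eulerMascheroniConstant : ℂ) * z) / Complex.Gamma (1 - z) := by
  intro z hz
  have hz1 : (1 - z) ≠ 0 := by
    intro h
    rw [← sub_eq_zero.mp h] at hz
    simp at hz
  refine ⟨?_, ?_, ?_⟩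
  · have h := (aux_hasSum c hc z hz Real.eulerMascheroniConstant).mul_left
      (1 / (2 * Real.pi * Complex.I))
    refine aux_congr h fun k => ?_
    rw [hC k, integral_const_mul]
    ring
  · have h := aux_laplace c hc z hz
    have e : ∀ t : ℝ, Complex.exp ((c : ℂ) + t * Complex.I) *
            (Complex.exp ((Real.eulerMascheroniConstant : ℂ) * z) *
              ((c : ℂ) + t * Complex.I) ^ z / ((c : ℂ) + t * Complex.I) ^ 2) * (1 - z) *
            Complex.I = (Complex.exp ((Real.eulerMascheroniConstant : ℂ) * z) * (1 - z) *
            Complex.I) * (Complex.exp ((c : ℂ) + t * Complex.I) *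
      (((c : ℂ) + t * Complex.I) ^ z / ((c : ℂ) + t * Complex.I) ^ 2)) := by
      intro t; ring
    simp_rw [e]
    rw [integral_const_mul, h]
    have hpi : (Real.pi : ℂ) ≠ 0 := by exact_mod_cast Real.pi_ne_zero
    field_simp
  · rw [show (2 : ℂ) - z = (1 - z) + 1 by ring, Complex.Gamma_add_one _ hz1, mul_comm,
      mul_div_mul_left _ _ hz1]
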